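/- arXiv:1108.5930 — 2 statements merged into one kernel-verified Lean document; each statement's English description precedes it below -/
import Mathlib

section
/- (Positivstellensatz for linear polynomials on spectrahedra.) Let L be a linear pencil of size m in n variables and f ∈ ℝ[X₁,…,Xₙ]₁ a linear polynomial. Then f ≥ 0 on S_L if and only if there exist linear polynomials ℓ₁,…,ℓₙ ∈ ℝ[X₁,…,Xₙ]₁, quadratic sos-matrices S₁,…,Sₙ ∈ ℝ[X₁,…,Xₙ]^(m×m), a positive semidefinite constant matrix S ∈ ℝ^(m×m), and c ≥ 0 such that: ℓᵢ² + tr(L·Sᵢ) lies in the ideal of ℝ[X₁,…,Xₙ] generated by ℓ₁,…,ℓ_{i−1} for each i ∈ {1,…,n}, and f − c − tr(L·S) lies in the ideal generated by ℓ₁,…,ℓₙ. -/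
open MvPolynomial Matrix

/-- The linear pencil `L = A 0 + X 1 * A 1 + ... + X n * A n` as a symmetric matrix
with entries in the polynomial ring `ℝ[X 1, ..., X n]`. -/
noncomputable def pencilPoly {n m : ℕ} (A : Fin (n+1) → Matrix (Fin m) (Fin m) ℝ) :
    Matrix (Fin m) (Fin m) (MvPolynomial (Fin n) ℝ) :=
  fun a b => MvPolynomial.C (A 0 a b) + ∑ i : Fin n, MvPolynomial.X i * MvPolynomial.C (A i.succ a b)

/-- Evaluation of the pencil at a point `x ∈ ℝⁿ`. -/
def pencilEval {n m : ℕ} (A : Fin (n+1) → Matrix (Fin m) (Fin m) ℝ) (x : Fin n → ℝ) :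
    Matrix (Fin m) (Fin m) ℝ :=
  A 0 + ∑ i : Fin n, x i • A i.succ

/-- The spectrahedron `S_L = {x ∈ ℝⁿ ∣ L(x) ⪰ 0}`. -/
def specSet {n m : ℕ} (A : Fin (n+1) → Matrix (Fin m) (Fin m) ℝ) : Set (Fin n → ℝ) :=
  {x | (pencilEval A x).PosSemidef}

/-- `vᵀ L v` for a vector `v` of polynomials. -/
noncomputable def vLv {n m : ℕ} (A : Fin (n+1) → Matrix (Fin m) (Fin m) ℝ)
    (v : Fin m → MvPolynomial (Fin n) ℝ) : MvPolynomial (Fin n) ℝ :=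
  ∑ a : Fin m, ∑ b : Fin m, v a * pencilPoly A a b * v b

/-- Membership in the quadratic module `M_L` associated to the pencil `L`:
`p = s + Σⱼ vⱼᵀ L vⱼ` with `s` a sum of squares. -/
def memQM {n m : ℕ} (A : Fin (n+1) → Matrix (Fin m) (Fin m) ℝ)
    (p : MvPolynomial (Fin n) ℝ) : Prop :=
  ∃ (k r : ℕ) (q : Fin k → MvPolynomial (Fin n) ℝ)
    (v : Fin r → Fin m → MvPolynomial (Fin n) ℝ),
    p = ∑ i, (q i)^2 + ∑ j, vLv A (v j)

/-- An sos-matrix: a matrix polynomial of the form `Pᵀ P`. -/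
def IsSosMatrix {n m : ℕ} (S : Matrix (Fin m) (Fin m) (MvPolynomial (Fin n) ℝ)) : Prop :=
  ∃ (s : ℕ) (P : Matrix (Fin s) (Fin m) (MvPolynomial (Fin n) ℝ)), S = Pᵀ * P

/-!
Let `C` be the cone of all polynomials `c + tr (L S)` modulo an ideal `I`, where `c ≥ 0` and `S` is
positive semidefinite. If `g` and `-g` both lie in `C`, then explicit quadratic sos-matrices certify
linear polynomials modulo `I`; once `I` contains everything that can be so certified, the lineality
space of `C` is therefore just `I`. In that case the affine part of `C` is generated, modulo `I`,
by `1` and the forms `uᵀ L u` with `u` in the unit sphere of a complement of the radical, a compact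
set disjoint from the lineality space. An affine `f` outside `C` is then separated from `C` by a
functional that is strictly positive on this compact set; its positivity at `1` makes it a positive
multiple of evaluation at a point, which lies in the spectrahedron and where `f` is negative.

So if `f` is nonnegative on the spectrahedron but not in `C`, some new linear polynomial can be
certified and adjoined to `I`. After `n` such steps the linear polynomials in `I` contain all those
vanishing at some point `x`, or `I` is the whole ring. Modulo `I`, the polynomial `f` is then the
constant `f x`, and if this is negative, it is a positive multiple of `uᵀ L u` for any `u`
with `uᵀ L(x) u < 0`.
-/

section Convexity

section LinearOrderedField

variable {R E : Type*} [Field R] [LinearOrder R] [IsStrictOrderedRing R] [AddCommGroup E]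
  [Module R E]

lemma convex_diff_lineal (C : PointedCone R E) : Convex R ((C : Set E) \ C.lineal) := by
  intro x hx y hy a b ha hb hab
  refine ⟨C.convex hx.1 hy.1 ha hb hab, fun hmem => ?_⟩
  rcases ha.eq_or_lt with rfl | ha
  · exact hy.2 (by simpa [(zero_add b).symm.trans hab] using hmem)
  · exact hx.2 ((PointedCone.IsFaceOf.lineal C).mem_of_smul_add_mem hx.1
      (C.smul_mem hb hy.1) ha hmem)

lemma lineal_sup_hull_neg_le {C : PointedCone R E} {f : E} (hf : f ∉ C) :
    (C ⊔ PointedCone.hull R {-f}).lineal ≤ C.lineal := by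
  rintro x ⟨hx, hx'⟩
  obtain ⟨c, hc, _, hr, hcx⟩ := Submodule.mem_sup.1 hx
  obtain ⟨c', hc', _, hr', hcx'⟩ := Submodule.mem_sup.1 hx'
  obtain ⟨r, rfl⟩ := Submodule.mem_span_singleton.1 hr
  obtain ⟨r', rfl⟩ := Submodule.mem_span_singleton.1 hr'
  have hsum : (r + r') • f = c + c' := by
    have h : c + r • -f + (c' + r' • -f) = 0 := by rw [hcx, hcx', add_neg_cancel]
    rw [smul_neg, smul_neg] at h
    rw [add_smul, ← sub_eq_zero, ← neg_eq_zero, ← h]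
    abel
  have hrr' : r + r' = 0 := by
    by_contra hne
    refine hf ?_
    rw [← inv_smul_smul₀ hne f, hsum]
    exact C.smul_mem (r + r')⁻¹.2 (C.add_mem hc hc')
  obtain ⟨rfl, rfl⟩ := add_eq_zero.1 hrr'
  rw [zero_smul, add_zero] at hcx hcx'
  exact PointedCone.mem_lineal.2 ⟨hcx ▸ hc, hcx' ▸ hc'⟩

lemma convexHull_eq_biUnion_image_stdSimplex [FiniteDimensional R E] (X : Set E) :
    convexHull R X = ⋃ k ∈ Set.Iic (Module.finrank R E + 1),
      (fun p : (Fin k → R) × (Fin k → E) => ∑ i, p.1 i • p.2 i) ''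
        (stdSimplex R (Fin k) ×ˢ Set.univ.pi fun _ => X) := by
  apply Set.Subset.antisymm
  · intro x hx
    obtain ⟨ι, _, z, w, hz, hind, hw, hsum, rfl⟩ := eq_pos_convex_span_of_mem_convexHull hx
    have hcard : Fintype.card ι ≤ Module.finrank R E + 1 :=
      hind.card_le_finrank_succ.trans (Nat.succ_le_succ (Submodule.finrank_le _))
    let e := (Fintype.equivFin ι).symm
    refine Set.mem_biUnion hcard ⟨(w ∘ e, z ∘ e),
      ⟨⟨fun i => (hw _).le, ?_⟩, fun i _ => hz ⟨e i, rfl⟩⟩, ?_⟩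
    · exact (e.sum_comp w).trans hsum
    · exact e.sum_comp fun i => w i • z i
  · refine Set.iUnion₂_subset fun k _ => ?_
    rintro _ ⟨⟨w, z⟩, ⟨⟨hw, hsum⟩, hz⟩, rfl⟩
    exact (convex_convexHull R X).sum_mem (fun i _ => hw i) hsum
      fun i _ => subset_convexHull R X (hz i trivial)

end LinearOrderedField

variable {E : Type*} [AddCommGroup E] [Module ℝ E] [FiniteDimensional ℝ E] [TopologicalSpace E]

lemma isCompact_convexHull [ContinuousAdd E] [ContinuousSMul ℝ E]
    {X : Set E} (hX : IsCompact X) : IsCompact (convexHull ℝ X) := by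
  rw [convexHull_eq_biUnion_image_stdSimplex]
  refine (Set.finite_Iic _).isCompact_biUnion fun k _ => ?_
  refine ((isCompact_stdSimplex ℝ (Fin k)).prod (isCompact_univ_pi fun _ => hX)).image ?_
  fun_prop

variable [IsTopologicalAddGroup E] [ContinuousSMul ℝ E]
  [T2Space E] [LocallyConvexSpace ℝ E]

lemma exists_strongDual_pos_of_subset_diff_lineal {C : PointedCone ℝ E} {X : Set E}
    (hX : IsCompact X) (hXC : X ⊆ (C : Set E) \ C.lineal) :
    ∃ φ : StrongDual ℝ E, (∀ y ∈ C.lineal, φ y = 0) ∧ ∀ x ∈ X, 0 < φ x := by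
  obtain ⟨φ, u, v, hφu, huv, hvφ⟩ := geometric_hahn_banach_closed_compact
    C.lineal.convex C.lineal.closed_of_finiteDimensional (convex_convexHull ℝ X)
    (isCompact_convexHull hX)
    (Set.disjoint_right.2 fun x hx => ((convex_diff_lineal C).convexHull_subset_iff.2 hXC hx).2)
  have hu : 0 < u := by simpa using hφu 0 C.lineal.zero_mem
  refine ⟨φ, fun y hy => ?_, fun x hx => (hu.trans huv).trans (hvφ x (subset_convexHull ℝ X hx))⟩
  by_contra hne
  have h := hφu _ (C.lineal.smul_mem (u / φ y) hy)
  rw [map_smul, smul_eq_mul, div_mul_cancel₀ _ hne] at h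
  exact h.false

lemma exists_strongDual_pos_neg_of_notMem {C : PointedCone ℝ E} {X : Set E}
    (hX : IsCompact X) (hXC : X ⊆ (C : Set E) \ C.lineal) {f : E} (hf : f ∉ C) :
    ∃ φ : StrongDual ℝ E, (∀ y ∈ C.lineal, φ y = 0) ∧ (∀ x ∈ X, 0 < φ x) ∧ φ f < 0 := by
  let D : PointedCone ℝ E := C ⊔ PointedCone.hull ℝ {-f}
  have hCD : C ≤ D := le_sup_left
  have hD : D.lineal ≤ C.lineal := lineal_sup_hull_neg_le hf
  have hXD : insert (-f) X ⊆ (D : Set E) \ D.lineal := by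
    refine Set.insert_subset ⟨?_, fun h => ?_⟩ fun x hx =>
      ⟨hCD (hXC hx).1, fun h => (hXC hx).2 (hD h)⟩
    · exact Submodule.mem_sup_right (Submodule.mem_span_singleton_self (-f))
    · exact hf (neg_neg f ▸ (hD h).2)
  obtain ⟨φ, hφ, hpos⟩ := exists_strongDual_pos_of_subset_diff_lineal (hX.insert (-f)) hXD
  refine ⟨φ, fun y hy => hφ y ⟨hCD hy.1, hCD hy.2⟩,
    fun x hx => hpos x (Set.mem_insert_of_mem _ hx), ?_⟩
  simpa using hpos (-f) (Set.mem_insert _ _)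

end Convexity

section AffinePolynomial

variable {R : Type*} {n : ℕ}

/-- The polynomial `v 0 + v 1 X₁ + ⋯ + v n Xₙ` of degree at most one with coefficient vector `v`.
Coefficient vectors provide the finite-dimensional space in which separation takes place. -/
noncomputable def affinePoly [CommSemiring R] :
    (Fin (n + 1) → R) →ₗ[R] MvPolynomial (Fin n) R :=
  Fintype.linearCombination R (Fin.cons 1 X)

section CommSemiring

variable [CommSemiring R]

lemma affinePoly_apply (v : Fin (n + 1) → R) :
    affinePoly v = C (v 0) + ∑ i, X i * C (v i.succ) := by
  simp [affinePoly, Fintype.linearCombination_apply, Fin.sum_univ_succ, smul_eq_C_mul, mul_comm]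

lemma affinePoly_single_zero (c : R) : affinePoly (Pi.single (0 : Fin (n + 1)) c) = C c := by
  simp [affinePoly, smul_eq_C_mul]

lemma affinePoly_single_succ (i : Fin n) (c : R) :
    affinePoly (Pi.single i.succ c) = monomial (Finsupp.single i 1) c := by
  simp [affinePoly, X, smul_monomial]

lemma totalDegree_affinePoly_le (v : Fin (n + 1) → R) : (affinePoly v).totalDegree ≤ 1 := by
  rw [affinePoly_apply]
  refine (totalDegree_add _ _).trans (max_le (by simp) (totalDegree_finsetSum_le fun i _ => ?_))
  rw [mul_comm, ← smul_eq_C_mul]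
  exact (totalDegree_smul_le _ _).trans (totalDegree_monomial_le _ _ |>.trans (by simp))

lemma mem_range_affinePoly_iff {p : MvPolynomial (Fin n) R} :
    p ∈ LinearMap.range (affinePoly (R := R)) ↔ p.totalDegree ≤ 1 := by
  refine ⟨?_, fun hp => ?_⟩
  · rintro ⟨v, rfl⟩
    exact totalDegree_affinePoly_le v
  · rw [p.as_sum]
    refine Submodule.sum_mem _ fun d hd => ?_
    rcases Nat.le_one_iff_eq_zero_or_eq_one.1 ((le_totalDegree hd).trans hp) with h | h
    · obtain rfl := (Finsupp.degree_eq_zero_iff d).1 h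
      exact ⟨_, affinePoly_single_zero _⟩
    · obtain ⟨i, rfl⟩ := (Finsupp.sum_eq_one_iff d).1 h
      exact ⟨_, affinePoly_single_succ i _⟩

end CommSemiring

section Field

variable [Field R]

lemma exists_eval_affinePoly_of_functional {φ : (Fin (n + 1) → R) →ₗ[R] R}
    (h0 : φ (Pi.single 0 1) ≠ 0) :
    ∃ x : Fin n → R, ∀ v, φ v = φ (Pi.single 0 1) * eval x (affinePoly v) := by
  refine ⟨fun i => φ (Pi.single i.succ 1) / φ (Pi.single 0 1), fun v => ?_⟩
  simp only [affinePoly_apply, map_add, map_sum, map_mul, eval_C, eval_X, mul_add, Finset.mul_sum]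
  conv_lhs => rw [pi_eq_sum_univ' v, map_sum, Fin.sum_univ_succ]
  simp only [map_smul, smul_eq_mul]
  congr 1
  · exact mul_comm _ _
  · exact Finset.sum_congr rfl fun i _ => by field_simp

/-- The coefficient vectors of the polynomials of degree at most one in the ideal `I`. -/
noncomputable def affinePart (I : Ideal (MvPolynomial (Fin n) R)) : Submodule R (Fin (n + 1) → R) :=
  (I.restrictScalars R).comap affinePoly

lemma mem_affinePart_iff {I : Ideal (MvPolynomial (Fin n) R)} {v : Fin (n + 1) → R} :
    v ∈ affinePart I ↔ affinePoly v ∈ I := .rfl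

lemma affinePart_lt_affinePart {I J : Ideal (MvPolynomial (Fin n) R)} (hIJ : I ≤ J)
    {p : MvPolynomial (Fin n) R} (hp : p.totalDegree ≤ 1) (hpJ : p ∈ J) (hpI : p ∉ I) :
    affinePart I < affinePart J := by
  obtain ⟨v, rfl⟩ := mem_range_affinePoly_iff.2 hp
  exact SetLike.lt_iff_le_and_exists.2 ⟨fun w hw => hIJ hw, v, hpJ, hpI⟩

lemma exists_mem_of_eval_eq_zero_of_le_finrank_affinePart {I : Ideal (MvPolynomial (Fin n) R)}
    (h1 : 1 ∉ I) (hn : n ≤ Module.finrank R (affinePart I)) :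
    ∃ x : Fin n → R, ∀ p : MvPolynomial (Fin n) R, p.totalDegree ≤ 1 → eval x p = 0 → p ∈ I := by
  have h1I : Pi.single 0 1 ∉ affinePart I := by
    rwa [mem_affinePart_iff, affinePoly_single_zero, C_1]
  obtain ⟨φ, hφ1, hφI⟩ := Submodule.exists_le_ker_of_notMem h1I
  have hker : affinePart I = LinearMap.ker φ := by
    refine Submodule.eq_of_le_of_finrank_le hφI ?_
    have hlt : Module.finrank R (LinearMap.ker φ) < Module.finrank R (Fin (n + 1) → R) :=
      Submodule.finrank_lt fun h => hφ1 (LinearMap.mem_ker.1 (h ▸ Submodule.mem_top))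
    rw [Module.finrank_fin_fun] at hlt
    lia
  obtain ⟨x, hx⟩ := exists_eval_affinePoly_of_functional hφ1
  refine ⟨x, fun p hp hxp => ?_⟩
  obtain ⟨v, rfl⟩ := mem_range_affinePoly_iff.2 hp
  rw [← mem_affinePart_iff, hker, LinearMap.mem_ker, hx, hxp, mul_zero]

end Field

end AffinePolynomial

lemma posSemidef_vecMulVec_self {ι : Type*} [Finite ι] (u : ι → ℝ) :
    (vecMulVec u u).PosSemidef := by
  simpa using posSemidef_vecMulVec_self_star u

section PencilTrace

variable {n m : ℕ} (A : Fin (n + 1) → Matrix (Fin m) (Fin m) ℝ)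

/-- The affine polynomial `tr (L S)` attached to a constant matrix `S`, as a linear map in `S`. -/
noncomputable def pencilTrace : Matrix (Fin m) (Fin m) ℝ →ₗ[ℝ] MvPolynomial (Fin n) ℝ :=
  traceLinearMap (Fin m) ℝ _ ∘ₗ LinearMap.mulLeft ℝ (pencilPoly A) ∘ₗ
    (Algebra.linearMap ℝ (MvPolynomial (Fin n) ℝ)).mapMatrix

/-- The coefficient vector of the affine polynomial `tr (L S)`, as a linear map in `S`. -/
def pencilTraceCoeff : Matrix (Fin m) (Fin m) ℝ →ₗ[ℝ] Fin (n + 1) → ℝ :=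
  LinearMap.pi fun i => traceLinearMap (Fin m) ℝ ℝ ∘ₗ LinearMap.mulLeft ℝ (A i)

lemma pencilTrace_apply (S : Matrix (Fin m) (Fin m) ℝ) :
    pencilTrace A S = (pencilPoly A * S.map C).trace := rfl

lemma affinePoly_pencilTraceCoeff (S : Matrix (Fin m) (Fin m) ℝ) :
    affinePoly (pencilTraceCoeff A S) = pencilTrace A S := by
  simp only [pencilTrace_apply, pencilTraceCoeff, LinearMap.pi_apply, LinearMap.comp_apply,
    LinearMap.mulLeft_apply, traceLinearMap_apply, pencilPoly, affinePoly_apply, trace, diag_apply,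
    mul_apply, Matrix.map_apply, add_mul, Finset.sum_mul, Finset.sum_add_distrib, map_sum, map_mul,
    Finset.mul_sum, mul_assoc]
  congr 1
  rw [Finset.sum_comm, Finset.sum_congr rfl fun _ _ => Finset.sum_comm]

lemma totalDegree_pencilTrace_le (S : Matrix (Fin m) (Fin m) ℝ) :
    (pencilTrace A S).totalDegree ≤ 1 := by
  rw [← affinePoly_pencilTraceCoeff]
  exact totalDegree_affinePoly_le _

lemma pencilTrace_vecMulVec (u v : Fin m → ℝ) :
    pencilTrace A (vecMulVec u v) = (pencilPoly A *ᵥ (C ∘ u)) ⬝ᵥ (C ∘ v) := by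
  have hmap : (vecMulVec u v).map C = vecMulVec (C ∘ u : _ → MvPolynomial (Fin n) ℝ) (C ∘ v) := by
    ext a b
    simp [vecMulVec_apply]
  rw [pencilTrace_apply, hmap, mul_vecMulVec, trace_vecMulVec]

lemma map_eval_pencilPoly (x : Fin n → ℝ) : (pencilPoly A).map (eval x) = pencilEval A x := by
  ext a b
  simp [pencilPoly, pencilEval, Matrix.sum_apply]

lemma eval_trace_pencilPoly_mul (x : Fin n → ℝ)
    (S : Matrix (Fin m) (Fin m) (MvPolynomial (Fin n) ℝ)) :
    eval x (pencilPoly A * S).trace = (pencilEval A x * S.map (eval x)).trace := by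
  rw [← map_eval_pencilPoly, ← Matrix.map_mul, AddMonoidHom.map_trace]

lemma eval_pencilTrace (x : Fin n → ℝ) (S : Matrix (Fin m) (Fin m) ℝ) :
    eval x (pencilTrace A S) = (pencilEval A x * S).trace := by
  rw [pencilTrace_apply, eval_trace_pencilPoly_mul, Matrix.map_map]
  simp [Function.comp_def]

variable {A}

lemma eval_trace_pencilPoly_mul_nonneg {x : Fin n → ℝ} (hx : x ∈ specSet A)
    {S : Matrix (Fin m) (Fin m) (MvPolynomial (Fin n) ℝ)} (hS : IsSosMatrix S) :
    0 ≤ eval x (pencilPoly A * S).trace := by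
  obtain ⟨s, P, rfl⟩ := hS
  rw [eval_trace_pencilPoly_mul, Matrix.map_mul, ← Matrix.mul_assoc, trace_mul_comm,
    ← Matrix.mul_assoc]
  exact (PosSemidef.mul_mul_conjTranspose_same hx (P.map (eval x))).trace_nonneg

lemma isSymm_pencilPoly (hA : ∀ i, (A i).IsSymm) : (pencilPoly A).IsSymm := by
  ext a b
  simp only [transpose_apply, pencilPoly, (hA _).apply]

lemma isSymm_pencilEval (hA : ∀ i, (A i).IsSymm) (x : Fin n → ℝ) : (pencilEval A x).IsSymm := by
  rw [← map_eval_pencilPoly]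
  exact (isSymm_pencilPoly hA).map _

lemma pencilTrace_vecMulVec_comm (hA : ∀ i, (A i).IsSymm) (u v : Fin m → ℝ) :
    pencilTrace A (vecMulVec u v) = pencilTrace A (vecMulVec v u) := by
  rw [pencilTrace_vecMulVec, pencilTrace_vecMulVec, dotProduct_comm, dotProduct_mulVec,
    ← mulVec_transpose, isSymm_pencilPoly hA]

lemma mem_specSet_iff_forall_vecMulVec (hA : ∀ i, (A i).IsSymm) {x : Fin n → ℝ} :
    x ∈ specSet A ↔ ∀ u, 0 ≤ eval x (pencilTrace A (vecMulVec u u)) := by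
  have heval (u : Fin m → ℝ) :
      eval x (pencilTrace A (vecMulVec u u)) = star u ⬝ᵥ pencilEval A x *ᵥ u := by
    rw [eval_pencilTrace, mul_vecMulVec, trace_vecMulVec, dotProduct_comm, star_trivial]
  simp only [heval]
  exact ⟨fun hx u => hx.dotProduct_mulVec_nonneg u,
    fun h => .of_dotProduct_mulVec_nonneg (isSymm_pencilEval hA x) h⟩

end PencilTrace

section QuadraticSos

variable {n m : ℕ} {S T : Matrix (Fin m) (Fin m) (MvPolynomial (Fin n) ℝ)}

lemma isSosMatrix_transpose_mul_self {ι : Type*} [Fintype ι]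
    (P : Matrix ι (Fin m) (MvPolynomial (Fin n) ℝ)) : IsSosMatrix (Pᵀ * P) := by
  refine ⟨Fintype.card ι, P.submatrix (Fintype.equivFin ι).symm id, ?_⟩
  rw [transpose_submatrix, submatrix_mul_equiv, submatrix_id_id]

namespace IsSosMatrix

lemma add (hS : IsSosMatrix S) (hT : IsSosMatrix T) : IsSosMatrix (S + T) := by
  obtain ⟨s, P, rfl⟩ := hS
  obtain ⟨t, Q, rfl⟩ := hT
  rw [← fromCols_mul_fromRows, ← transpose_fromRows]
  exact isSosMatrix_transpose_mul_self _

lemma sq_smul (hS : IsSosMatrix S) (p : MvPolynomial (Fin n) ℝ) : IsSosMatrix (p ^ 2 • S) := by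
  obtain ⟨s, P, rfl⟩ := hS
  exact ⟨s, p • P, by rw [transpose_smul, Matrix.smul_mul, Matrix.mul_smul, smul_smul, sq]⟩

lemma vecMulVec_self (w : Fin m → MvPolynomial (Fin n) ℝ) : IsSosMatrix (vecMulVec w w) := by
  rw [vecMulVec_eq Unit, ← transpose_replicateRow]
  exact isSosMatrix_transpose_mul_self _

open scoped MatrixOrder in
lemma map_C {G : Matrix (Fin m) (Fin m) ℝ} (hG : G.PosSemidef) :
    IsSosMatrix (G.map C : Matrix (Fin m) (Fin m) (MvPolynomial (Fin n) ℝ)) := by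
  obtain ⟨B, rfl⟩ := CStarAlgebra.nonneg_iff_eq_star_mul_self.1 hG.nonneg
  rw [star_eq_conjTranspose, conjTranspose_eq_transpose_of_trivial, Matrix.map_mul, transpose_map]
  exact isSosMatrix_transpose_mul_self _

end IsSosMatrix

/-- A quadratic sos-matrix: an sos-matrix all of whose entries have degree at most two. -/
def IsQuadraticSosMatrix (S : Matrix (Fin m) (Fin m) (MvPolynomial (Fin n) ℝ)) : Prop :=
  IsSosMatrix S ∧ ∀ a b, (S a b).totalDegree ≤ 2

namespace IsQuadraticSosMatrix

lemma zero : IsQuadraticSosMatrix (0 : Matrix (Fin m) (Fin m) (MvPolynomial (Fin n) ℝ)) :=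
  ⟨⟨0, 0, by simp⟩, by simp⟩

lemma add (hS : IsQuadraticSosMatrix S) (hT : IsQuadraticSosMatrix T) :
    IsQuadraticSosMatrix (S + T) :=
  ⟨hS.1.add hT.1, fun a b => (totalDegree_add _ _).trans (max_le (hS.2 a b) (hT.2 a b))⟩

lemma sq_smul_map_C {G : Matrix (Fin m) (Fin m) ℝ} (hG : G.PosSemidef)
    {p : MvPolynomial (Fin n) ℝ} (hp : p.totalDegree ≤ 1) :
    IsQuadraticSosMatrix (p ^ 2 • (G.map C : Matrix _ _ (MvPolynomial (Fin n) ℝ))) := by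
  refine ⟨(IsSosMatrix.map_C hG).sq_smul p, fun a b => ?_⟩
  calc (p ^ 2 * C (G a b)).totalDegree
      ≤ (p ^ 2).totalDegree + (C (G a b) : MvPolynomial (Fin n) ℝ).totalDegree :=
        totalDegree_mul _ _
    _ ≤ 2 * p.totalDegree := by rw [totalDegree_C]; exact totalDegree_pow p 2
    _ ≤ 2 := by lia

lemma vecMulVec_self {w : Fin m → MvPolynomial (Fin n) ℝ} (hw : ∀ a, (w a).totalDegree ≤ 1) :
    IsQuadraticSosMatrix (vecMulVec w w) :=
  ⟨.vecMulVec_self w, fun a b => (totalDegree_mul _ _).trans (add_le_add (hw a) (hw b))⟩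

end IsQuadraticSosMatrix

end QuadraticSos

section PencilCone

variable {n m : ℕ}

/-- The cone of all polynomials congruent to `c + tr (L S)` modulo the ideal `I`, where `c ≥ 0` is
a constant and `S` a positive semidefinite constant matrix. -/
def pencilCone (A : Fin (n + 1) → Matrix (Fin m) (Fin m) ℝ) (I : Ideal (MvPolynomial (Fin n) ℝ)) :
    PointedCone ℝ (MvPolynomial (Fin n) ℝ) where
  carrier := {p | ∃ (S : Matrix (Fin m) (Fin m) ℝ) (c : ℝ), S.PosSemidef ∧ 0 ≤ c ∧
    p - C c - pencilTrace A S ∈ I}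
  zero_mem' := ⟨0, 0, .zero, le_rfl, by simp⟩
  add_mem' := by
    rintro p q ⟨S, c, hS, hc, hp⟩ ⟨T, d, hT, hd, hq⟩
    refine ⟨S + T, c + d, hS.add hT, add_nonneg hc hd, ?_⟩
    convert I.add_mem hp hq using 1
    rw [map_add, map_add]
    ring
  smul_mem' := by
    rintro ⟨r, hr⟩ p ⟨S, c, hS, hc, hp⟩
    refine ⟨r • S, r * c, hS.smul hr, mul_nonneg hr hc, ?_⟩
    convert I.mul_mem_left (C r) hp using 1
    rw [map_smul, map_mul, smul_eq_C_mul, Nonneg.mk_smul, smul_eq_C_mul]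
    ring

variable {A : Fin (n + 1) → Matrix (Fin m) (Fin m) ℝ} {I J : Ideal (MvPolynomial (Fin n) ℝ)}
  {p : MvPolynomial (Fin n) ℝ}

lemma mem_pencilCone_of_mem (hp : p ∈ I) : p ∈ pencilCone A I :=
  ⟨0, 0, .zero, le_rfl, by simpa using hp⟩

lemma C_mem_pencilCone {c : ℝ} (hc : 0 ≤ c) : C c ∈ pencilCone A I :=
  ⟨0, c, .zero, hc, by simp⟩

lemma pencilTrace_mem_pencilCone {S : Matrix (Fin m) (Fin m) ℝ} (hS : S.PosSemidef) :
    pencilTrace A S ∈ pencilCone A I :=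
  ⟨S, 0, hS, le_rfl, by simp⟩

lemma pencilCone_mono (hIJ : I ≤ J) : pencilCone A I ≤ pencilCone A J :=
  fun _ ⟨S, c, hS, hc, h⟩ => ⟨S, c, hS, hc, hIJ h⟩

lemma eval_nonneg_of_mem_pencilCone {x : Fin n → ℝ} (hx : x ∈ specSet A)
    (hI : I ≤ RingHom.ker (eval x)) (hp : p ∈ pencilCone A I) : 0 ≤ eval x p := by
  obtain ⟨S, c, hS, hc, h⟩ := hp
  have heval : eval x (p - C c - pencilTrace A S) = 0 := hI h
  rw [map_sub, map_sub, eval_C] at heval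
  have htrace : 0 ≤ eval x (pencilTrace A S) := eval_trace_pencilPoly_mul_nonneg hx (.map_C hS)
  linarith

end PencilCone

section Certificate

variable {n m : ℕ}

/-- A certificate that `p` vanishes on the part of the spectrahedron lying in the zero set of `I`:
there `p ^ 2` and `tr (L S)` are both nonnegative with sum zero. -/
def HasSosCertificate (A : Fin (n + 1) → Matrix (Fin m) (Fin m) ℝ)
    (I : Ideal (MvPolynomial (Fin n) ℝ)) (p : MvPolynomial (Fin n) ℝ) : Prop :=
  ∃ S, IsQuadraticSosMatrix S ∧ p ^ 2 + (pencilPoly A * S).trace ∈ I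

variable {A : Fin (n + 1) → Matrix (Fin m) (Fin m) ℝ} {I : Ideal (MvPolynomial (Fin n) ℝ)}
  {p : MvPolynomial (Fin n) ℝ} {G H : Matrix (Fin m) (Fin m) ℝ}

namespace HasSosCertificate

lemma zero : HasSosCertificate A I 0 :=
  ⟨0, .zero, by simp⟩

lemma eval_eq_zero (hp : HasSosCertificate A I p) {x : Fin n → ℝ} (hx : x ∈ specSet A)
    (hI : I ≤ RingHom.ker (eval x)) : eval x p = 0 := by
  obtain ⟨S, hS, h⟩ := hp
  have heval : eval x (p ^ 2 + (pencilPoly A * S).trace) = 0 := hI h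
  rw [map_add, map_pow] at heval
  have htrace := eval_trace_pencilPoly_mul_nonneg hx hS.1
  exact pow_eq_zero_iff two_ne_zero |>.1 (by linarith [sq_nonneg (eval x p)])

lemma one_of_C_add_pencilTrace_mem {c : ℝ} (hc : 0 < c) (hG : G.PosSemidef)
    (h : C c + pencilTrace A G ∈ I) : HasSosCertificate A I 1 := by
  refine ⟨(c⁻¹ • G).map C, ⟨.map_C (hG.smul (inv_nonneg.2 hc.le)),
    fun a b => (totalDegree_C _).le.trans zero_le_two⟩, ?_⟩
  convert I.mul_mem_left (C c⁻¹) h using 1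
  rw [one_pow, ← pencilTrace_apply, map_smul, smul_eq_C_mul, mul_add, ← C_mul,
    inv_mul_cancel₀ hc.ne', C_1]

/-- The squares `((1 ∓ g) / 2) ^ 2` differ by `g`, so that `g ^ 2 + ((1 - g) / 2) ^ 2 g` is
`((1 + g) / 2) ^ 2 g` and adding `((1 + g) / 2) ^ 2 h` yields a multiple of `g + h`. -/
lemma pencilTrace_of_add_mem (hG : G.PosSemidef) (hH : H.PosSemidef)
    (h : pencilTrace A G + pencilTrace A H ∈ I) : HasSosCertificate A I (pencilTrace A G) := by
  set g := pencilTrace A G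
  have hg : g.totalDegree ≤ 1 := totalDegree_pencilTrace_le A G
  have hadd : (C 2⁻¹ * (1 + g)).totalDegree ≤ 1 := by
    rw [← smul_eq_C_mul]
    exact (totalDegree_smul_le _ _).trans ((totalDegree_add _ _).trans (by simpa using hg))
  have hsub : (C 2⁻¹ * (1 - g)).totalDegree ≤ 1 := by
    rw [← smul_eq_C_mul]
    exact (totalDegree_smul_le _ _).trans ((totalDegree_sub _ _).trans (by simpa using hg))
  refine ⟨(C 2⁻¹ * (1 - g)) ^ 2 • G.map C + (C 2⁻¹ * (1 + g)) ^ 2 • H.map C,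
    (IsQuadraticSosMatrix.sq_smul_map_C hG hsub).add (.sq_smul_map_C hH hadd), ?_⟩
  convert I.mul_mem_left ((C 2⁻¹ * (1 + g)) ^ 2) h using 1
  have hfour : (C 2⁻¹ : MvPolynomial (Fin n) ℝ) ^ 2 * 4 = 1 := by
    rw [← C_pow, ← map_ofNat C 4, ← C_mul]
    norm_num
  simp only [mul_add, trace_add, Matrix.mul_smul, trace_smul, smul_eq_mul, ← pencilTrace_apply]
  linear_combination -g ^ 2 * hfour

/-- The certificate is `w wᵀ` with `w = p v + q u`. Modulo `I`, the term `q ^ 2 uᵀ L u` of `wᵀ L w`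
vanishes and the remaining ones are `p ^ 2 vᵀ L v + 2 p ^ 2 q = -p ^ 2`. -/
lemma pencilTrace_vecMulVec_of_mem (hA : ∀ i, (A i).IsSymm) {u : Fin m → ℝ}
    (hu : pencilTrace A (vecMulVec u u) ∈ I) (v : Fin m → ℝ) :
    HasSosCertificate A I (pencilTrace A (vecMulVec u v)) := by
  set p := pencilTrace A (vecMulVec u v) with hp
  set r := pencilTrace A (vecMulVec v v) with hr
  set q : MvPolynomial (Fin n) ℝ := C (-2⁻¹) * (1 + r) with hq
  have hqdeg : q.totalDegree ≤ 1 := by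
    rw [hq, ← smul_eq_C_mul]
    refine (totalDegree_smul_le _ _).trans ((totalDegree_add _ _).trans ?_)
    simpa using totalDegree_pencilTrace_le A _
  have hdeg (f : MvPolynomial (Fin n) ℝ) (hf : f.totalDegree ≤ 1) (c : ℝ) :
      (f * C c).totalDegree ≤ 1 := by
    rw [mul_comm, ← smul_eq_C_mul]
    exact (totalDegree_smul_le _ _).trans hf
  let w : Fin m → MvPolynomial (Fin n) ℝ := p • (C ∘ v) + q • (C ∘ u)
  refine ⟨vecMulVec w w, .vecMulVec_self fun a => (totalDegree_add _ _).trans (max_le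
    (hdeg p (totalDegree_pencilTrace_le A _) _) (hdeg q hqdeg _)), ?_⟩
  convert I.mul_mem_left (q ^ 2) hu using 1
  have htwo : (C (-2⁻¹) : MvPolynomial (Fin n) ℝ) * 2 = -1 := by
    rw [← map_ofNat C 2, ← C_mul]
    norm_num
  rw [mul_vecMulVec, trace_vecMulVec]
  simp only [w, mulVec_add, mulVec_smul, add_dotProduct, dotProduct_add, smul_dotProduct,
    dotProduct_smul, smul_eq_mul, ← pencilTrace_vecMulVec, pencilTrace_vecMulVec_comm hA v u,
    ← hp, ← hr]
  linear_combination p ^ 2 * (1 + r) * htwo + 2 * p ^ 2 * hq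

end HasSosCertificate

/-- An ideal is certificate closed if it contains every certified polynomial of degree at most
one, so that sos-matrices no longer provide new linear equations on the spectrahedron. -/
def IsCertificateClosed (A : Fin (n + 1) → Matrix (Fin m) (Fin m) ℝ)
    (I : Ideal (MvPolynomial (Fin n) ℝ)) : Prop :=
  ∀ p : MvPolynomial (Fin n) ℝ, p.totalDegree ≤ 1 → HasSosCertificate A I p → p ∈ I

lemma IsCertificateClosed.mem_of_mem_lineal_pencilCone (hI : IsCertificateClosed A I)
    (hp : p ∈ (pencilCone A I).lineal) : p ∈ I := by
  obtain ⟨⟨G, c, hG, hc, hpG⟩, ⟨H, d, hH, hd, hpH⟩⟩ := PointedCone.mem_lineal.1 hp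
  have hsum : C (c + d) + pencilTrace A (G + H) ∈ I := by
    convert I.neg_mem (I.add_mem hpG hpH) using 1
    rw [map_add, map_add]
    ring
  rcases (add_nonneg hc hd).eq_or_lt with hcd | hcd
  · obtain rfl : c = 0 := by linarith
    rw [← hcd, C_0, zero_add, map_add] at hsum
    have hg := hI _ (totalDegree_pencilTrace_le A G) (.pencilTrace_of_add_mem hG hH hsum)
    simpa using I.add_mem hpG hg
  · have hone := hI 1 (by simp) (.one_of_C_add_pencilTrace_mem hcd (hG.add hH) hsum)
    exact (I.eq_top_of_isUnit_mem hone isUnit_one).ge trivial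

end Certificate

section CertificateClosed

variable {n m : ℕ} {A : Fin (n + 1) → Matrix (Fin m) (Fin m) ℝ}
  {I : Ideal (MvPolynomial (Fin n) ℝ)}

/-- The radical of the bilinear form `(u, v) ↦ uᵀ L v` taken modulo the ideal `I`. -/
def pencilRadical (A : Fin (n + 1) → Matrix (Fin m) (Fin m) ℝ)
    (I : Ideal (MvPolynomial (Fin n) ℝ)) : Submodule ℝ (Fin m → ℝ) where
  carrier := {u | ∀ v, pencilTrace A (vecMulVec u v) ∈ I}
  zero_mem' v := by simp
  add_mem' hu hu' v := by
    rw [add_vecMulVec, map_add]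
    exact I.add_mem (hu v) (hu' v)
  smul_mem' r u hu v := by
    rw [smul_vecMulVec, map_smul, smul_eq_C_mul]
    exact I.mul_mem_left _ (hu v)

lemma IsCertificateClosed.mem_pencilRadical (hI : IsCertificateClosed A I)
    (hA : ∀ i, (A i).IsSymm) {u : Fin m → ℝ} (hu : pencilTrace A (vecMulVec u u) ∈ I) :
    u ∈ pencilRadical A I :=
  fun v => hI _ (totalDegree_pencilTrace_le A _) (.pencilTrace_vecMulVec_of_mem hA hu v)

lemma IsCertificateClosed.mem_lineal_comap_pencilCone_iff (hI : IsCertificateClosed A I)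
    {y : Fin (n + 1) → ℝ} :
    y ∈ ((pencilCone A I).comap affinePoly).lineal ↔ affinePoly y ∈ I := by
  refine ⟨fun hy => hI.mem_of_mem_lineal_pencilCone ?_, fun hy => ?_⟩
  · simpa using hy
  · simpa using And.intro (mem_pencilCone_of_mem hy) (mem_pencilCone_of_mem (I.neg_mem hy))

lemma IsCertificateClosed.single_mem_comap_pencilCone_diff_lineal (hI : IsCertificateClosed A I)
    (h1 : 1 ∉ I) : Pi.single 0 1 ∈
      ((pencilCone A I).comap affinePoly : Set (Fin (n + 1) → ℝ)) \
        ((pencilCone A I).comap affinePoly).lineal := by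
  refine ⟨?_, fun h => h1 ?_⟩
  · simpa [affinePoly_single_zero] using C_mem_pencilCone (A := A) (I := I) zero_le_one
  · simpa [affinePoly_single_zero] using hI.mem_lineal_comap_pencilCone_iff.1 h

lemma IsCertificateClosed.pencilTraceCoeff_mem_comap_pencilCone_diff_lineal
    (hI : IsCertificateClosed A I) (hA : ∀ i, (A i).IsSymm) {u : Fin m → ℝ}
    (hu : u ∉ pencilRadical A I) : pencilTraceCoeff A (vecMulVec u u) ∈
      ((pencilCone A I).comap affinePoly : Set (Fin (n + 1) → ℝ)) \
        ((pencilCone A I).comap affinePoly).lineal := by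
  refine ⟨?_, fun h => hu (hI.mem_pencilRadical hA ?_)⟩
  · simpa [affinePoly_pencilTraceCoeff]
      using pencilTrace_mem_pencilCone (A := A) (I := I) (posSemidef_vecMulVec_self u)
  · simpa [affinePoly_pencilTraceCoeff] using hI.mem_lineal_comap_pencilCone_iff.1 h

/-- The functional is strictly positive on the compact set of forms `qᵀ L q` with `q` in the unit
sphere of a complement of the radical, where the cone contains no line. -/
lemma IsCertificateClosed.exists_functional_pos (hI : IsCertificateClosed A I)
    (hA : ∀ i, (A i).IsSymm) {v : Fin (n + 1) → ℝ} (hv : affinePoly v ∉ pencilCone A I)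
    {Q : Submodule ℝ (Fin m → ℝ)} (hQ : Disjoint (pencilRadical A I) Q) :
    ∃ φ : (Fin (n + 1) → ℝ) →ₗ[ℝ] ℝ, (∀ y, affinePoly y ∈ I → φ y = 0) ∧
      0 < φ (Pi.single 0 1) ∧ φ v < 0 ∧
      ∀ q ∈ Q, ‖q‖ = 1 → 0 < φ (pencilTraceCoeff A (vecMulVec q q)) := by
  let C₀ : PointedCone ℝ (Fin (n + 1) → ℝ) := (pencilCone A I).comap affinePoly
  let X : Set (Fin (n + 1) → ℝ) := insert (Pi.single 0 1)
    ((fun q => pencilTraceCoeff A (vecMulVec q q)) '' (Metric.sphere 0 1 ∩ Q))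
  have hX : IsCompact X := by
    refine .insert (((isCompact_sphere 0 1).inter_right Q.closed_of_finiteDimensional).image ?_) _
    exact (pencilTraceCoeff A).continuous_of_finiteDimensional.comp
      (continuous_id.matrix_vecMulVec continuous_id)
  have hXC : X ⊆ (C₀ : Set (Fin (n + 1) → ℝ)) \ C₀.lineal := by
    refine Set.insert_subset (hI.single_mem_comap_pencilCone_diff_lineal fun h => hv ?_) ?_
    · exact mem_pencilCone_of_mem ((I.eq_top_of_isUnit_mem h isUnit_one).ge trivial)
    · rintro _ ⟨q, ⟨hq, hqQ⟩, rfl⟩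
      refine hI.pencilTraceCoeff_mem_comap_pencilCone_diff_lineal hA fun hqI => ?_
      simp [Submodule.disjoint_def.1 hQ q hqI hqQ] at hq
  obtain ⟨φ, hφ, hpos, hneg⟩ := exists_strongDual_pos_neg_of_notMem hX hXC (f := v) hv
  exact ⟨φ, fun y hy => hφ y (hI.mem_lineal_comap_pencilCone_iff.2 hy),
    hpos _ (Set.mem_insert _ _), hneg,
    fun q hq hq1 => hpos _ (.inr ⟨q, ⟨by simpa using hq1, hq⟩, rfl⟩)⟩

lemma functional_pencilTraceCoeff_vecMulVec_self_nonneg (hA : ∀ i, (A i).IsSymm)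
    {Q : Submodule ℝ (Fin m → ℝ)} (hQ : Codisjoint (pencilRadical A I) Q)
    {φ : (Fin (n + 1) → ℝ) →ₗ[ℝ] ℝ} (hφ : ∀ y, affinePoly y ∈ I → φ y = 0)
    (hpos : ∀ q ∈ Q, ‖q‖ = 1 → 0 < φ (pencilTraceCoeff A (vecMulVec q q))) (u : Fin m → ℝ) :
    0 ≤ φ (pencilTraceCoeff A (vecMulVec u u)) := by
  obtain ⟨a, q, ha, hq, rfl⟩ := Submodule.codisjoint_iff_exists_add_eq.1 hQ u
  have hleft (w : Fin m → ℝ) : φ (pencilTraceCoeff A (vecMulVec a w)) = 0 :=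
    hφ _ (by rw [affinePoly_pencilTraceCoeff]; exact ha w)
  have hright : φ (pencilTraceCoeff A (vecMulVec q a)) = 0 :=
    hφ _ (by rw [affinePoly_pencilTraceCoeff, pencilTrace_vecMulVec_comm hA]; exact ha q)
  simp only [add_vecMulVec, vecMulVec_add, map_add, hleft, hright, zero_add]
  rcases eq_or_ne q 0 with rfl | hq0
  · simp
  · have hnorm : ‖‖q‖⁻¹ • q‖ = 1 := by
      rw [norm_smul, norm_inv, norm_norm, inv_mul_cancel₀ (norm_ne_zero_iff.2 hq0)]
    have hunit := hpos _ (Q.smul_mem ‖q‖⁻¹ hq) hnorm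
    simp only [smul_vecMulVec, vecMulVec_smul, map_smul, smul_eq_mul, ← mul_assoc] at hunit
    exact (pos_of_mul_pos_right hunit (by positivity)).le

theorem IsCertificateClosed.exists_eval_neg (hI : IsCertificateClosed A I)
    (hA : ∀ i, (A i).IsSymm) {f : MvPolynomial (Fin n) ℝ} (hf : f.totalDegree ≤ 1)
    (hfI : f ∉ pencilCone A I) : ∃ x ∈ specSet A, eval x f < 0 := by
  obtain ⟨v, rfl⟩ := mem_range_affinePoly_iff.2 hf
  obtain ⟨Q, hQ⟩ := (pencilRadical A I).exists_isCompl
  obtain ⟨φ, hφI, hφ1, hφv, hφQ⟩ := hI.exists_functional_pos hA hfI hQ.disjoint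
  obtain ⟨x, hx⟩ := exists_eval_affinePoly_of_functional hφ1.ne'
  refine ⟨x, (mem_specSet_iff_forall_vecMulVec hA).2 fun u => ?_, ?_⟩
  · have hu := functional_pencilTraceCoeff_vecMulVec_self_nonneg hA hQ.codisjoint hφI hφQ u
    rw [hx, affinePoly_pencilTraceCoeff] at hu
    exact nonneg_of_mul_nonneg_right hu hφ1
  · rw [hx] at hφv
    exact neg_of_mul_neg_right hφv hφ1.le

end CertificateClosed

section CertificateChain

variable {n m k : ℕ} {A : Fin (n + 1) → Matrix (Fin m) (Fin m) ℝ}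

lemma mem_pencilCone_of_le_finrank_affinePart (hA : ∀ i, (A i).IsSymm)
    {I : Ideal (MvPolynomial (Fin n) ℝ)} (hn : n ≤ Module.finrank ℝ (affinePart I))
    {f : MvPolynomial (Fin n) ℝ} (hf : f.totalDegree ≤ 1)
    (hpos : ∀ x ∈ specSet A, 0 ≤ eval x f) : f ∈ pencilCone A I := by
  by_cases h1 : 1 ∈ I
  · exact mem_pencilCone_of_mem ((I.eq_top_of_isUnit_mem h1 isUnit_one).ge trivial)
  obtain ⟨x, hx⟩ := exists_mem_of_eval_eq_zero_of_le_finrank_affinePart h1 hn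
  have hcongr {g : MvPolynomial (Fin n) ℝ} (hg : g.totalDegree ≤ 1) (hgI : g ∈ pencilCone A I)
      (hfg : eval x f = eval x g) : f ∈ pencilCone A I := by
    have hsub := hx (f - g) ((totalDegree_sub f g).trans (max_le hf hg)) (by simp [hfg])
    simpa using add_mem (mem_pencilCone_of_mem (A := A) hsub) hgI
  rcases le_or_gt 0 (eval x f) with hfx | hfx
  · exact hcongr (by simp) (C_mem_pencilCone hfx) (by simp)
  · have hxA : x ∉ specSet A := fun hxA => (hpos x hxA).not_gt hfx
    rw [mem_specSet_iff_forall_vecMulVec hA] at hxA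
    push Not at hxA
    obtain ⟨u, hu⟩ := hxA
    refine hcongr (totalDegree_pencilTrace_le A _) (pencilTrace_mem_pencilCone
      ((posSemidef_vecMulVec_self u).smul (div_nonneg_of_nonpos hfx.le hu.le))) ?_
    rw [map_smul, smul_eval, div_mul_cancel₀ _ hu.ne]

/-- A sequence of linear equations valid on the spectrahedron, each of them certified modulo the
preceding ones. -/
def IsCertificateChain (A : Fin (n + 1) → Matrix (Fin m) (Fin m) ℝ)
    (ℓ : Fin k → MvPolynomial (Fin n) ℝ) : Prop :=
  ∀ i, (ℓ i).totalDegree ≤ 1 ∧ HasSosCertificate A (Ideal.span (ℓ '' {j | j < i})) (ℓ i)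

namespace IsCertificateChain

variable {ℓ : Fin k → MvPolynomial (Fin n) ℝ} {p : MvPolynomial (Fin n) ℝ}

lemma snoc (hℓ : IsCertificateChain A ℓ) (hp : p.totalDegree ≤ 1)
    (hcert : HasSosCertificate A (Ideal.span (Set.range ℓ)) p) :
    IsCertificateChain A (Fin.snoc ℓ p : Fin (k + 1) → MvPolynomial (Fin n) ℝ) := by
  intro i
  induction i using Fin.lastCases with
  | last =>
    have himage : (Fin.snoc ℓ p : Fin (k + 1) → _) '' {j | j < Fin.last k} = Set.range ℓ := by
      ext q
      simp [Fin.exists_fin_succ', Fin.castSucc_lt_last]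
    rw [himage, Fin.snoc_last]
    exact ⟨hp, hcert⟩
  | cast i =>
    have himage : (Fin.snoc ℓ p : Fin (k + 1) → _) '' {j | j < i.castSucc} = ℓ '' {j | j < i} := by
      ext q
      simp [Fin.exists_fin_succ', Fin.le_last]
    rw [himage, Fin.snoc_castSucc]
    exact hℓ i

lemma eval_eq_zero (hℓ : IsCertificateChain A ℓ) {x : Fin n → ℝ} (hx : x ∈ specSet A) (i : Fin k) :
    eval x (ℓ i) = 0 := by
  induction i using WellFoundedLT.induction with
  | ind i ih =>
    refine (hℓ i).2.eval_eq_zero hx (Ideal.span_le.2 ?_)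
    rintro _ ⟨j, hj, rfl⟩
    exact ih j hj

end IsCertificateChain

lemma exists_certificateChain_mem_or_le_finrank (hA : ∀ i, (A i).IsSymm)
    {f : MvPolynomial (Fin n) ℝ} (hf : f.totalDegree ≤ 1)
    (hpos : ∀ x ∈ specSet A, 0 ≤ eval x f) (k : ℕ) :
    ∃ ℓ : Fin k → MvPolynomial (Fin n) ℝ, IsCertificateChain A ℓ ∧
      (f ∈ pencilCone A (Ideal.span (Set.range ℓ)) ∨
        k ≤ Module.finrank ℝ (affinePart (Ideal.span (Set.range ℓ)))) := by
  induction k with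
  | zero => exact ⟨Fin.elim0, fun i => i.elim0, .inr (Nat.zero_le _)⟩
  | succ k ih =>
    obtain ⟨ℓ, hℓ, hk⟩ := ih
    have hle (p : MvPolynomial (Fin n) ℝ) : Ideal.span (Set.range ℓ) ≤
        Ideal.span (Set.range (Fin.snoc ℓ p : Fin (k + 1) → MvPolynomial (Fin n) ℝ)) :=
      Ideal.span_mono (by rw [Fin.range_snoc]; exact Set.subset_insert _ _)
    by_cases hfℓ : f ∈ pencilCone A (Ideal.span (Set.range ℓ))
    · exact ⟨Fin.snoc ℓ 0, hℓ.snoc (by simp) .zero, .inl (pencilCone_mono (hle 0) hfℓ)⟩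
    have hclosed : ¬ IsCertificateClosed A (Ideal.span (Set.range ℓ)) := fun hI => by
      obtain ⟨x, hx, hfx⟩ := hI.exists_eval_neg hA hf hfℓ
      exact (hpos x hx).not_gt hfx
    simp only [IsCertificateClosed, not_forall] at hclosed
    obtain ⟨p, hp, hcert, hpℓ⟩ := hclosed
    have hp_mem : p ∈ Ideal.span (Set.range (Fin.snoc ℓ p : Fin (k + 1) → _)) :=
      Ideal.subset_span ⟨Fin.last k, Fin.snoc_last _ _⟩
    refine ⟨Fin.snoc ℓ p, hℓ.snoc hp hcert, .inr ?_⟩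
    exact ((hk.resolve_left hfℓ).trans_lt
      (Submodule.finrank_lt_finrank_of_lt (affinePart_lt_affinePart (hle p) hp hp_mem hpℓ)))

theorem exists_certificateChain_mem_pencilCone (hA : ∀ i, (A i).IsSymm)
    {f : MvPolynomial (Fin n) ℝ} (hf : f.totalDegree ≤ 1)
    (hpos : ∀ x ∈ specSet A, 0 ≤ eval x f) :
    ∃ ℓ : Fin n → MvPolynomial (Fin n) ℝ, IsCertificateChain A ℓ ∧
      f ∈ pencilCone A (Ideal.span (Set.range ℓ)) := by
  obtain ⟨ℓ, hℓ, hmem | hrank⟩ := exists_certificateChain_mem_or_le_finrank hA hf hpos n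
  · exact ⟨ℓ, hℓ, hmem⟩
  · exact ⟨ℓ, hℓ, mem_pencilCone_of_le_finrank_affinePart hA hrank hf hpos⟩

end CertificateChain

/-- **Positivstellensatz for linear polynomials on spectrahedra.** A linear polynomial `f` is
nonnegative on `S_L` iff there are linear polynomials `ℓ₁, …, ℓₙ`, quadratic sos-matrices
`S₁, …, Sₙ`, a positive semidefinite constant matrix `S` and `c ≥ 0` such that
`ℓᵢ² + tr(L Sᵢ) ∈ (ℓ₁, …, ℓ_{i-1})` for each `i` and `f - c - tr(L S) ∈ (ℓ₁, …, ℓₙ)`. -/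
theorem linear_positivstellensatz_on_spectrahedra
    (n m : ℕ) (A : Fin (n+1) → Matrix (Fin m) (Fin m) ℝ)
    (hsymm : ∀ i, (A i).IsSymm)
    (f : MvPolynomial (Fin n) ℝ) (hf : f.totalDegree ≤ 1) :
    (∀ x ∈ specSet A, 0 ≤ MvPolynomial.eval x f) ↔
      ∃ (ℓ : Fin n → MvPolynomial (Fin n) ℝ)
        (S : Fin n → Matrix (Fin m) (Fin m) (MvPolynomial (Fin n) ℝ))
        (S₀ : Matrix (Fin m) (Fin m) ℝ) (c : ℝ),
        (∀ i, (ℓ i).totalDegree ≤ 1) ∧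
        (∀ i, IsSosMatrix (S i)) ∧ (∀ i a b, (S i a b).totalDegree ≤ 2) ∧
        S₀.PosSemidef ∧ 0 ≤ c ∧
        (∀ i : Fin n, (ℓ i)^2 + (pencilPoly A * S i).trace ∈
          Ideal.span (ℓ '' {j : Fin n | j < i})) ∧
        f - MvPolynomial.C c - (pencilPoly A * S₀.map MvPolynomial.C).trace ∈
          Ideal.span (Set.range ℓ) := by
  constructor
  · intro hpos
    obtain ⟨ℓ, hℓ, S₀, c, hS₀, hc, hmem⟩ := exists_certificateChain_mem_pencilCone hsymm hf hpos
    choose hdeg S hS hcert using hℓ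
    exact ⟨ℓ, S, S₀, c, hdeg, fun i => (hS i).1, fun i => (hS i).2, hS₀, hc, hcert, hmem⟩
  · rintro ⟨ℓ, S, S₀, c, hdeg, hsos, hquad, hS₀, hc, hcert, hmem⟩ x hx
    have hℓ : IsCertificateChain A ℓ := fun i => ⟨hdeg i, S i, ⟨hsos i, hquad i⟩, hcert i⟩
    refine eval_nonneg_of_mem_pencilCone hx (Ideal.span_le.2 ?_) ⟨S₀, c, hS₀, hc, hmem⟩
    rintro _ ⟨i, rfl⟩
    exact hℓ.eval_eq_zero hx i
end

section
/- Let d, e ∈ ℕ₀, let I be a real radical ideal of ℝ[X₁,…,Xₙ], and let U ∈ ℝ^(s(d)×s(d)) be a symmetric matrix such that the polynomial [X]_dᵀ U [X]_d belongs to I. Suppose W ∈ ℝ^(s(e)×s(d)) satisfies that U − WᵀW is positive semidefinite. Then the polynomial [X]_eᵀ W [X]_d belongs to I. -/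
open MvPolynomial Matrix

/-- The column vector `[X]_d` of all monomials of degree at most `d` in `n` variables,
indexed by `Sym (Fin (n+1)) d` (multisets of size `d` over `{0, 1, …, n}`, where the
index `0` plays the role of a homogenizing variable evaluated at `1`): the map sending
such a multiset to the corresponding monomial is a bijection onto the monomials of degree
at most `d`, and `Fintype.card (Sym (Fin (n+1)) d) = (d+n).choose n = s(d)`. -/
noncomputable def monVec (n d : ℕ) : Sym (Fin (n+1)) d → MvPolynomial (Fin n) ℝ :=
  fun s => (Multiset.map (fun i : Fin (n+1) =>
      Fin.cases (motive := fun _ => MvPolynomial (Fin n) ℝ) 1 (fun j => MvPolynomial.X j) i)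
      (s : Multiset (Fin (n+1)))).prod

/-- The scalar polynomial `[X]_eᵀ W [X]_d` for a real matrix `W`. -/
noncomputable def quadFormPoly {n d e : ℕ}
    (W : Matrix (Sym (Fin (n+1)) e) (Sym (Fin (n+1)) d) ℝ) : MvPolynomial (Fin n) ℝ :=
  ∑ a, ∑ b, MvPolynomial.C (W a b) * monVec n e a * monVec n d b

/-- An ideal `I ⊆ ℝ[X₁, …, Xₙ]` is real radical if whenever `f^(2k) + s ∈ I` with `k ≥ 1`
and `s` a sum of squares, then `f ∈ I`. -/
def IsRealRadical {n : ℕ} (I : Ideal (MvPolynomial (Fin n) ℝ)) : Prop :=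
  ∀ (f : MvPolynomial (Fin n) ℝ) (k : ℕ) (s : MvPolynomial (Fin n) ℝ),
    0 < k → (∃ (r : ℕ) (p : Fin r → MvPolynomial (Fin n) ℝ), s = ∑ i, (p i)^2) →
    f^(2*k) + s ∈ I → f ∈ I

/-!
Write `U - WᵀW = VᵀV`. For a vector `v` over a commutative `ℝ`-algebra this gives
`vᵀ U v = (W v)ᵀ (W v) + (V v)ᵀ (V v)`. A real ideal containing this sum of squares contains every
entry of `W v`, hence every combination `uᵀ W v` of these entries.
-/

/-- Real ideals of a commutative ring `A`, i.e. the ideals `I` for which a sum of squares vanishes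
in `A ⧸ I` only if each summand does; one square is split off the sum, the rest being an
`IsSumSq`. -/
def IsRealIdeal {A : Type*} [CommRing A] (I : Ideal A) : Prop :=
  ∀ ⦃a s : A⦄, IsSumSq s → a ^ 2 + s ∈ I → a ∈ I

lemma exists_eq_sum_sq_of_isSumSq {R : Type*} [Semiring R] {s : R} (hs : IsSumSq s) :
    ∃ (r : ℕ) (p : Fin r → R), s = ∑ i, p i ^ 2 := by
  induction hs with
  | zero => exact ⟨0, Fin.elim0, by simp⟩
  | sq_add a _ ih =>
    obtain ⟨r, p, rfl⟩ := ih
    exact ⟨r + 1, Fin.cons a p, by simp [Fin.sum_univ_succ, sq]⟩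

lemma IsRealRadical.isRealIdeal {n : ℕ} {I : Ideal (MvPolynomial (Fin n) ℝ)}
    (hI : IsRealRadical I) : IsRealIdeal I :=
  fun a s hs h ↦ hI a 1 s one_pos (exists_eq_sum_sq_of_isSumSq hs) h

lemma IsRealIdeal.mem_of_dotProduct_self_add_mem {A ι : Type*} [CommRing A] [Fintype ι]
    {I : Ideal A} (hI : IsRealIdeal I) {w : ι → A} {s : A} (hs : IsSumSq s)
    (h : w ⬝ᵥ w + s ∈ I) (i : ι) : w i ∈ I := by
  classical
  have hrest : IsSumSq (∑ j ∈ Finset.univ.erase i, w j * w j + s) :=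
    (IsSumSq.sum_mul_self _ w).add hs
  refine hI hrest ?_
  rwa [sq, ← add_assoc, Finset.add_sum_erase _ (fun j ↦ w j * w j) (Finset.mem_univ i)]

lemma dotProduct_transpose_mul_self_mulVec {R ι κ : Type*} [CommSemiring R] [Fintype ι]
    [Fintype κ] (B : Matrix ι κ R) (v : κ → R) :
    v ⬝ᵥ (Bᵀ * B) *ᵥ v = (B *ᵥ v) ⬝ᵥ (B *ᵥ v) := by
  rw [← mulVec_mulVec, dotProduct_transpose_mulVec]

open scoped MatrixOrder in
lemma exists_eq_transpose_mul_self_of_posSemidef {κ : Type*} [Fintype κ]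
    {S : Matrix κ κ ℝ} (hS : S.PosSemidef) : ∃ V : Matrix κ κ ℝ, S = Vᵀ * V := by
  classical
  exact CStarAlgebra.nonneg_iff_eq_star_mul_self.mp hS.nonneg

theorem quadFormPoly_mem_realRadical_ideal_general {A ι κ : Type*} [CommRing A] [Algebra ℝ A]
    [Fintype ι] [Fintype κ] {I : Ideal A} (hI : IsRealIdeal I)
    {U : Matrix κ κ ℝ} {W : Matrix ι κ ℝ} (hW : (U - Wᵀ * W).PosSemidef)
    (u : ι → A) (v : κ → A) (hUI : v ⬝ᵥ U.map (algebraMap ℝ A) *ᵥ v ∈ I) :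
    u ⬝ᵥ W.map (algebraMap ℝ A) *ᵥ v ∈ I := by
  obtain ⟨V, hV⟩ := exists_eq_transpose_mul_self_of_posSemidef hW
  set W' := W.map (algebraMap ℝ A)
  set V' := V.map (algebraMap ℝ A)
  have hU : U.map (algebraMap ℝ A) = W'ᵀ * W' + V'ᵀ * V' := by
    rw [← add_sub_cancel (Wᵀ * W) U, hV, Matrix.map_add _ (map_add _), Matrix.map_mul,
      Matrix.map_mul, transpose_map, transpose_map]
  have hsq : (W' *ᵥ v) ⬝ᵥ (W' *ᵥ v) + (V' *ᵥ v) ⬝ᵥ (V' *ᵥ v) ∈ I := by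
    rwa [hU, add_mulVec, dotProduct_add, dotProduct_transpose_mul_self_mulVec,
      dotProduct_transpose_mul_self_mulVec] at hUI
  have hrow : ∀ i, (W' *ᵥ v) i ∈ I :=
    hI.mem_of_dotProduct_self_add_mem (IsSumSq.sum_mul_self _ _) hsq
  exact I.sum_mem fun i _ ↦ I.mul_mem_left (u i) (hrow i)

lemma quadFormPoly_eq_dotProduct_mulVec {n d e : ℕ}
    (W : Matrix (Sym (Fin (n + 1)) e) (Sym (Fin (n + 1)) d) ℝ) :
    quadFormPoly W =
      monVec n e ⬝ᵥ W.map (algebraMap ℝ (MvPolynomial (Fin n) ℝ)) *ᵥ monVec n d := by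
  simp only [quadFormPoly, dotProduct, mulVec, map_apply, algebraMap_eq, Finset.mul_sum]
  exact Finset.sum_congr rfl fun a _ ↦ Finset.sum_congr rfl fun b _ ↦ by ring

/-- **Proposition.** Let `I` be a real radical ideal of `ℝ[X₁, …, Xₙ]` and `U` a symmetric
`s(d) × s(d)` matrix with `[X]_dᵀ U [X]_d ∈ I`. If `W` is an `s(e) × s(d)` matrix with
`U - WᵀW` positive semidefinite, then `[X]_eᵀ W [X]_d ∈ I`. -/
theorem quadFormPoly_mem_realRadical_ideal
    (n d e : ℕ) (I : Ideal (MvPolynomial (Fin n) ℝ)) (hI : IsRealRadical I)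
    (U : Matrix (Sym (Fin (n+1)) d) (Sym (Fin (n+1)) d) ℝ) (hU : U.IsSymm)
    (hUI : quadFormPoly U ∈ I)
    (W : Matrix (Sym (Fin (n+1)) e) (Sym (Fin (n+1)) d) ℝ)
    (hW : (U - Wᵀ * W).PosSemidef) :
    quadFormPoly W ∈ I := by
  rw [quadFormPoly_eq_dotProduct_mulVec] at hUI ⊢
  exact quadFormPoly_mem_realRadical_ideal_general hI.isRealIdeal hW _ _ hUI
end
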